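/- arXiv:1805.12345 — 4 statements merged into one kernel-verified Lean document; each statement's English description precedes it below -/
import Mathlib

section
/- Let q be a prime power and n a positive integer with gcd(n,q)=1. Let r ≥ 3 and δ ≥ 2 with (r+δ-1) dividing gcd(n, q-1) and gcd(n/(r+δ-1), r+δ-1) dividing δ; set ρ = n/(r+δ-1). Let ξ be a primitive n-th root of unity in the splitting field of x^n - 1 over F_q, let α = ξ^ρ ∈ F_q (a primitive (r+δ-1)-th root of unity), let a, b be integers with aρ + b(r+δ-1) = δ, and let γ = α^a ∈ F_q. Then no nonzero polynomial c(x) ∈ F_q[x] of degree less than n having at most δ+1 nonzero coefficients is divisible by g(x) = (x-1)(x-γ)·∏_{i=1}^{δ-1}(x^ρ - α^i); equivalently, the q-ary cyclic code with generator polynomial g(x) has minimum distance at least δ+2. -/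
open Polynomial

/-!
Split `P` by residues modulo `ρ`, as `P = ∑ s < ρ, X ^ s * P_s(X ^ ρ)` with `deg P_s < m`. Each
factor `X ^ ρ - α ^ i` of `P` makes `α ^ i` a root of every `P_s`, so by the BCH bound each nonzero
`P_s` has at least `δ` nonzero coefficients. If two of the `P_s` are nonzero, then `P` has at least
`2 * δ ≥ δ + 2` of them. If only one is, then `P` is `X ^ s * P_s(X ^ ρ)`, and its roots `1` and `γ`
give `P_s` the further roots `1` and `γ ^ ρ = α ^ δ`; now `P_s` vanishes at `α ^ 0, …, α ^ δ`, and
the BCH bound yields `δ + 2`.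
-/

open scoped Finset

section BCH

variable {R : Type*} [CommRing R] [IsDomain R]

theorem eq_zero_of_forall_lt_sum_mul_pow_eq_zero {ι : Type*} {J : Finset ι} {x v : ι → R}
    (hx : Set.InjOn x J) (h : ∀ i < #J, ∑ j ∈ J, v j * x j ^ i = 0) : ∀ j ∈ J, v j = 0 := by
  let e : Fin #J ≃ J := J.equivFin.symm
  have hinj : Function.Injective fun k => x (e k) := hx.injective.comp e.injective
  have hzero : (fun k => v (e k)) = 0 :=
    Matrix.eq_zero_of_forall_pow_sum_mul_pow_eq_zero hinj fun i => by
      rw [e.sum_comp fun j : J => v j * x j ^ (i : ℕ), J.sum_coe_sort fun j => v j * x j ^ (i : ℕ)]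
      exact h i i.isLt
  intro j hj
  simpa using congrFun hzero (e.symm ⟨j, hj⟩)

/-- The BCH bound: the roots say that the first `N` power moments of the weights
`Q.coeff k * α ^ (l * k)` at the distinct nodes `α ^ k` vanish. -/
theorem lt_card_support_of_isRoot_pow {α : R} {m : ℕ} (hα : IsPrimitiveRoot α m) {Q : R[X]}
    (hQ : Q ≠ 0) (hdeg : Q.natDegree < m) {l N : ℕ} (hroot : ∀ i < N, Q.IsRoot (α ^ (l + i))) :
    N < #Q.support := by
  by_contra! hcard
  have hlt : ∀ k ∈ Q.support, k < m := fun k hk => (le_natDegree_of_mem_supp k hk).trans_lt hdeg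
  have hinj : Set.InjOn (α ^ ·) Q.support := fun j hj k hk =>
    hα.pow_inj (hlt j hj) (hlt k hk)
  have hmoment : ∀ i < #Q.support, ∑ k ∈ Q.support, Q.coeff k * α ^ (l * k) * (α ^ k) ^ i = 0 := by
    intro i hi
    rw [← (hroot i (hi.trans_le hcard)).eq_zero, eval_eq_sum, Polynomial.sum]
    exact Finset.sum_congr rfl fun k _ => by ring
  obtain ⟨k, hk⟩ := nonempty_support_iff.2 hQ
  have hα0 : α ≠ 0 := hα.ne_zero (Nat.ne_zero_of_lt hdeg)
  exact mul_ne_zero (mem_support_iff.1 hk) (pow_ne_zero _ hα0)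
    (eq_zero_of_forall_lt_sum_mul_pow_eq_zero hinj hmoment k hk)

end BCH

section Multisection

theorem coeff_iterate_divX {R : Type*} [Semiring R] (P : R[X]) (s k : ℕ) :
    (divX^[s] P).coeff k = P.coeff (k + s) := by
  induction s generalizing k with
  | zero => rfl
  | succ s ih => rw [Function.iterate_succ_apply', coeff_divX, ih, add_right_comm, add_assoc]

section CommSemiring

variable {R : Type*} [CommSemiring R] {ρ s : ℕ}

/-- The `s`-th multisection of `P` modulo `ρ`: the polynomial `∑ k, P.coeff (k * ρ + s) * X ^ k`,
which collects the coefficients of `P` at the exponents congruent to `s` when `s < ρ`. -/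
noncomputable def multisection (ρ s : ℕ) (P : R[X]) : R[X] :=
  contract ρ (divX^[s] P)

theorem coeff_multisection (hρ : ρ ≠ 0) (s : ℕ) (P : R[X]) (k : ℕ) :
    (multisection ρ s P).coeff k = P.coeff (k * ρ + s) := by
  rw [multisection, coeff_contract hρ, coeff_iterate_divX]

theorem natDegree_multisection_lt (s : ℕ) {P : R[X]} {m : ℕ} (hP : P.natDegree < ρ * m) :
    (multisection ρ s P).natDegree < m := by
  have hρ : ρ ≠ 0 := by rintro rfl; simp at hP
  have hm : m ≠ 0 := by rintro rfl; simp at hP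
  rw [← Nat.le_sub_one_iff_lt hm.pos, natDegree_le_iff_coeff_eq_zero]
  intro k hk
  have hmk : ρ * m ≤ k * ρ + s :=
    (Nat.mul_le_mul_left ρ (Nat.le_of_pred_lt hk)).trans (by rw [mul_comm]; exact le_self_add)
  rw [coeff_multisection hρ]
  exact coeff_eq_zero_of_natDegree_lt (hP.trans_le hmk)

theorem card_support_multisection (hs : s < ρ) (P : R[X]) :
    #(multisection ρ s P).support = #{e ∈ P.support | e % ρ = s} := by
  have hρ : ρ ≠ 0 := Nat.ne_zero_of_lt hs
  have hinj : Function.Injective fun k => k * ρ + s := fun j k h =>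
    Nat.eq_of_mul_eq_mul_right hρ.pos (Nat.add_right_cancel h)
  rw [← Finset.card_image_of_injective _ hinj]
  congr 1
  ext e
  simp only [Finset.mem_image, Finset.mem_filter, mem_support_iff, coeff_multisection hρ]
  constructor
  · rintro ⟨k, hk, rfl⟩
    exact ⟨hk, by rw [Nat.mul_add_mod', Nat.mod_eq_of_lt hs]⟩
  · rintro ⟨he, rfl⟩
    exact ⟨e / ρ, by rwa [Nat.div_add_mod'], Nat.div_add_mod' e ρ⟩

theorem sum_card_support_multisection (hρ : ρ ≠ 0) (P : R[X]) :
    ∑ s ∈ Finset.range ρ, #(multisection ρ s P).support = #P.support := by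
  rw [Finset.card_eq_sum_card_fiberwise (f := (· % ρ)) (t := Finset.range ρ)
    fun e _ => Finset.mem_coe.2 (Finset.mem_range.2 (Nat.mod_lt e hρ.pos))]
  exact Finset.sum_congr rfl fun s hs => card_support_multisection (Finset.mem_range.1 hs) P

theorem sum_X_pow_mul_expand_multisection (hρ : ρ ≠ 0) (P : R[X]) :
    ∑ s ∈ Finset.range ρ, X ^ s * expand R ρ (multisection ρ s P) = P := by
  ext e
  simp only [finsetSum_coeff, coeff_X_pow_mul', coeff_expand hρ.pos, coeff_multisection hρ]
  rw [Finset.sum_eq_single_of_mem (e % ρ) (Finset.mem_range.2 (Nat.mod_lt e hρ.pos))]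
  · rw [if_pos (Nat.mod_le e ρ), if_pos (Nat.dvd_sub_mod e),
      Nat.div_mul_cancel (Nat.dvd_sub_mod e), Nat.sub_add_cancel (Nat.mod_le e ρ)]
  · intro s hs hne
    rw [← ite_and, if_neg]
    rintro ⟨hse, hdvd⟩
    have hmod : s % ρ = e % ρ := (Nat.modEq_iff_dvd' hse).2 hdvd
    exact hne ((Nat.mod_eq_of_lt (Finset.mem_range.1 hs)).symm.trans hmod)

theorem isRoot_multisection_of_forall_ne [NoZeroDivisors R] (hs : s < ρ) {P : R[X]}
    (honly : ∀ t < ρ, t ≠ s → multisection ρ t P = 0) {x : R} (hx : x ≠ 0) (h : P.IsRoot x) :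
    (multisection ρ s P).IsRoot (x ^ ρ) := by
  have hP : P = X ^ s * expand R ρ (multisection ρ s P) := by
    conv_lhs => rw [← sum_X_pow_mul_expand_multisection (Nat.ne_zero_of_lt hs) P]
    refine Finset.sum_eq_single_of_mem s (Finset.mem_range.2 hs) fun t ht hts => ?_
    rw [honly t (Finset.mem_range.1 ht) hts, map_zero, mul_zero]
  rw [hP, IsRoot.def, eval_mul, eval_pow, eval_X, expand_eval] at h
  exact (mul_eq_zero.1 h).resolve_left (pow_ne_zero s hx)

end CommSemiring

section CommRing

variable {R : Type*} [CommRing R] {ρ s : ℕ}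

theorem multisection_X_pow_sub_C_mul (hs : s < ρ) (u : R) (Q : R[X]) :
    multisection ρ s ((X ^ ρ - C u) * Q) = (X - C u) * multisection ρ s Q := by
  have hρ : ρ ≠ 0 := Nat.ne_zero_of_lt hs
  ext (_ | k)
  · simp [coeff_multisection hρ, sub_mul, coeff_X_pow_mul', hs]
  · have hk : (k + 1) * ρ + s = k * ρ + s + ρ := by ring
    simp only [coeff_multisection hρ, sub_mul, coeff_sub, coeff_C_mul, coeff_X_mul, hk,
      coeff_X_pow_mul]

theorem isRoot_multisection_of_dvd (hs : s < ρ) {u : R} {P : R[X]}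
    (h : X ^ ρ - C u ∣ P) : (multisection ρ s P).IsRoot u := by
  obtain ⟨Q, rfl⟩ := h
  rw [multisection_X_pow_sub_C_mul hs]
  exact root_mul_right_of_isRoot _ (root_X_sub_C.2 rfl)

end CommRing

end Multisection

section CyclicCode

variable {R : Type*} [CommRing R] [IsDomain R] {m ρ δ : ℕ} {α γ : R} {P : R[X]}

theorem le_card_support_multisection_of_dvd (hα : IsPrimitiveRoot α m) (hdeg : P.natDegree < ρ * m)
    (hdvd : ∀ i ∈ Finset.Icc 1 (δ - 1), X ^ ρ - C (α ^ i) ∣ P) {s : ℕ} (hs : s < ρ)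
    (hne : multisection ρ s P ≠ 0) : δ ≤ #(multisection ρ s P).support := by
  have hlt := lt_card_support_of_isRoot_pow hα hne (natDegree_multisection_lt s hdeg) (l := 1)
    (N := δ - 1) fun i hi =>
      isRoot_multisection_of_dvd hs (hdvd (1 + i) (Finset.mem_Icc.2 (by lia)))
  lia

theorem add_two_le_card_support_multisection_of_forall_ne (hα : IsPrimitiveRoot α m)
    (hdeg : P.natDegree < ρ * m) (hdvd : ∀ i ∈ Finset.Icc 1 (δ - 1), X ^ ρ - C (α ^ i) ∣ P)
    (hone : P.IsRoot 1) (hγ : P.IsRoot γ) (hγρ : γ ^ ρ = α ^ δ) {s : ℕ} (hs : s < ρ)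
    (hne : multisection ρ s P ≠ 0) (honly : ∀ t < ρ, t ≠ s → multisection ρ t P = 0) :
    δ + 2 ≤ #(multisection ρ s P).support := by
  have hdegs := natDegree_multisection_lt s hdeg
  have hγ0 : γ ≠ 0 := (pow_ne_zero_iff (Nat.ne_zero_of_lt hs)).1
    (hγρ ▸ pow_ne_zero δ (hα.ne_zero (Nat.ne_zero_of_lt hdegs)))
  refine lt_card_support_of_isRoot_pow hα hne hdegs (l := 0) (N := δ + 1) fun i hi => ?_
  rw [zero_add]
  obtain rfl | rfl | hi' : i = 0 ∨ i = δ ∨ i ∈ Finset.Icc 1 (δ - 1) := by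
    rw [Finset.mem_Icc]; lia
  · simpa using isRoot_multisection_of_forall_ne hs honly one_ne_zero hone
  · simpa only [hγρ] using isRoot_multisection_of_forall_ne hs honly hγ0 hγ
  · exact isRoot_multisection_of_dvd hs (hdvd i hi')

theorem add_two_le_card_support_of_dvd_of_isRoot (hδ : 2 ≤ δ) (hα : IsPrimitiveRoot α m)
    (hP : P ≠ 0) (hdeg : P.natDegree < ρ * m)
    (hdvd : ∀ i ∈ Finset.Icc 1 (δ - 1), X ^ ρ - C (α ^ i) ∣ P) (hone : P.IsRoot 1)
    (hγ : P.IsRoot γ) (hγρ : γ ^ ρ = α ^ δ) : δ + 2 ≤ #P.support := by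
  have hρ : ρ ≠ 0 := by rintro rfl; simp at hdeg
  rw [← sum_card_support_multisection hρ P]
  obtain ⟨s, hs, hne⟩ : ∃ s < ρ, multisection ρ s P ≠ 0 := by
    by_contra! hzero
    refine hP ?_
    rw [← sum_X_pow_mul_expand_multisection hρ P]
    exact Finset.sum_eq_zero fun s hs => by rw [hzero s (Finset.mem_range.1 hs), map_zero, mul_zero]
  by_cases honly : ∀ t < ρ, t ≠ s → multisection ρ t P = 0
  · have hle := add_two_le_card_support_multisection_of_forall_ne hα hdeg hdvd hone hγ hγρ hs hne
      honly
    exact hle.trans (Finset.single_le_sum (f := fun t => #(multisection ρ t P).support)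
      (fun _ _ => Nat.zero_le _) (Finset.mem_range.2 hs))
  · push Not at honly
    obtain ⟨t, ht, hts, hnet⟩ := honly
    calc δ + 2 ≤ δ + δ := by lia
      _ ≤ #(multisection ρ t P).support + #(multisection ρ s P).support :=
        add_le_add (le_card_support_multisection_of_dvd hα hdeg hdvd ht hnet)
          (le_card_support_multisection_of_dvd hα hdeg hdvd hs hne)
      _ = ∑ k ∈ {t, s}, #(multisection ρ k P).support :=
        (Finset.sum_pair (f := fun k => #(multisection ρ k P).support) hts).symm
      _ ≤ ∑ k ∈ Finset.range ρ, #(multisection ρ k P).support :=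
        Finset.sum_le_sum_of_subset (by simp [Finset.insert_subset_iff, hs, ht])

end CyclicCode

theorem zpow_pow_eq_pow_of_pow_eq_one {G : Type*} [GroupWithZero G] {α : G} (hα : α ≠ 0)
    {m ρ δ : ℕ} (hm : α ^ m = 1) {a b : ℤ} (hab : a * ρ + b * m = δ) : (α ^ a) ^ ρ = α ^ δ := by
  rw [← zpow_natCast α δ, ← hab, zpow_add₀ hα, zpow_mul, zpow_mul', zpow_natCast,
    zpow_natCast, hm, one_zpow, mul_one]

theorem min_dist_ge_delta_add_two_general {K : Type*} [Field K] {m ρ δ : ℕ} (hδ : 2 ≤ δ) {α : K}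
    (hα : IsPrimitiveRoot α m) {a b : ℤ} (hab : a * ρ + b * m = δ) {c : K[X]} (hc : c ≠ 0)
    (hdeg : c.natDegree < ρ * m)
    (hdvd : (X - 1) * (X - C (α ^ a)) * ∏ i ∈ Finset.Icc 1 (δ - 1), (X ^ ρ - C (α ^ i)) ∣ c) :
    δ + 2 ≤ #c.support := by
  have hα0 : α ≠ 0 := hα.ne_zero (by rintro rfl; simp at hdeg)
  have hfactor : ∀ i ∈ Finset.Icc 1 (δ - 1), X ^ ρ - C (α ^ i) ∣ c := fun i hi =>
    ((Finset.dvd_prod_of_mem (fun i => X ^ ρ - C (α ^ i)) hi).mul_left _).trans hdvd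
  have hroots := (dvd_mul_right _ _).trans hdvd
  have hone : c.IsRoot 1 := dvd_iff_isRoot.1 ((dvd_mul_right _ _).trans hroots)
  have hγ : c.IsRoot (α ^ a) := dvd_iff_isRoot.1 ((dvd_mul_left _ _).trans hroots)
  exact add_two_le_card_support_of_dvd_of_isRoot hδ hα hc hdeg hfactor hone hγ
    (zpow_pow_eq_pow_of_pow_eq_one hα0 hα.pow_eq_one hab)

/-- The key step of Theorem 2: with `ρ = n/(r+δ-1)`, `gcd(ρ, r+δ-1) ∣ δ`, `ξ` a primitive
`n`-th root of unity, `α = ξ^ρ`, `aρ + b(r+δ-1) = δ` and `γ = α^a`, no nonzero polynomial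
`c(x) ∈ F_q[x]` of degree `< n` with at most `δ + 1` nonzero coefficients is divisible by
`g(x) = (x-1)(x-γ)·∏_{i=1}^{δ-1}(x^ρ - α^i)`; equivalently, the `q`-ary cyclic code with
generator polynomial `g` has minimum distance at least `δ + 2`. -/
theorem min_dist_ge_delta_add_two (F K : Type*) [Field F] [Fintype F] [Field K] [Algebra F K]
    (q n r δ : ℕ) (hq : Fintype.card F = q) (hn : 0 < n) (hcop : Nat.Coprime n q)
    (hr : 3 ≤ r) (hδ : 2 ≤ δ) (hdvd : (r + δ - 1) ∣ Nat.gcd n (q - 1))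
    (ρ : ℕ) (hρ : ρ = n / (r + δ - 1))
    (hgcd : Nat.gcd ρ (r + δ - 1) ∣ δ)
    (ξ : K) (hξ : IsPrimitiveRoot ξ n) (α : K) (hα : α = ξ ^ ρ)
    (a b : ℤ) (hab : a * (ρ : ℤ) + b * ((r + δ - 1 : ℕ) : ℤ) = (δ : ℤ))
    (γ : K) (hγ : γ = α ^ a) :
    ∀ c : F[X], c ≠ 0 → c.natDegree < n → c.support.card ≤ δ + 1 →
      ¬ ((X - 1) * (X - C γ) * ∏ i ∈ Finset.Icc 1 (δ - 1), (X ^ ρ - C (α ^ i))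
          ∣ c.map (algebraMap F K)) := by
  intro c hc hdeg hcard hg
  have hinj := (algebraMap F K).injective
  have hnρ : n = ρ * (r + δ - 1) := by
    rw [hρ, Nat.div_mul_cancel (hdvd.trans (Nat.gcd_dvd_left _ _))]
  have hle := min_dist_ge_delta_add_two_general hδ (hα ▸ hξ.pow hn hnρ) hab
    ((Polynomial.map_ne_zero_iff hinj).2 hc) (by rwa [natDegree_map, ← hnρ]) (hγ ▸ hg)
  rw [support_map_of_injective c hinj] at hle
  lia
end

section
/- Let q be a prime power and n an odd positive integer with gcd(n,q)=1. Let r ≥ 4 with (r+2) dividing gcd(n, q+1) and gcd(n/(r+2), r+2) = 1; set ρ = n/(r+2). Let ξ be a primitive n-th root of unity in the splitting field of x^n - 1 over F_q, let α = ξ^ρ (a primitive (r+2)-th root of unity satisfying α^{q+1} = 1), let a, b be integers with aρ + b(r+2) = 1, and let γ = α^a. Then the polynomial g(x) = (x-1)(x^ρ - α)(x^ρ - α^{-1})(x - γ^2)(x - γ^{-2}) has all its coefficients in F_q. -/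
open Polynomial

/-!
An element of an extension `K` of `F_q` lies in `F_q` exactly when it is fixed by `x ↦ x ^ q`, so a
polynomial over `K` has coefficients in `F_q` exactly when it is fixed by the coefficientwise
Frobenius map. As `α ^ (q + 1) = γ ^ (q + 1) = 1`, Frobenius inverts `α` and `γ`, and so merely
interchanges the factors `X ^ ρ - α`, `X ^ ρ - α⁻¹` and the factors `X - γ ^ 2`, `X - γ ^ (-2)`.
-/

theorem pow_div_pow_eq_one {M : Type*} [Monoid M] {x : M} {n d m : ℕ} (hx : x ^ n = 1)
    (hdn : d ∣ n) (hdm : d ∣ m) : (x ^ (n / d)) ^ m = 1 := by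
  obtain ⟨k, rfl⟩ := hdm
  rw [← pow_mul, ← mul_assoc, Nat.div_mul_cancel hdn, pow_mul, hx, one_pow]

theorem zpow_pow_eq_one {G : Type*} [DivisionMonoid G] {x : G} {m : ℕ} (hx : x ^ m = 1) (a : ℤ) :
    (x ^ a) ^ m = 1 := by
  rw [← zpow_natCast, zpow_comm, zpow_natCast, hx, one_zpow]

section Frobenius

variable {F K : Type*} [Field F] [Fintype F]

theorem mem_range_algebraMap_iff_pow_card_eq [CommRing K] [IsDomain K] [Algebra F K] {x : K} :
    x ∈ Set.range (algebraMap F K) ↔ x ^ Fintype.card F = x := by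
  constructor
  · rintro ⟨c, rfl⟩
    rw [← map_pow, FiniteField.pow_card]
  · intro hx
    have hsplits : (X ^ Fintype.card F - X : F[X]).Splits := by
      simpa using (FiniteField.isSplittingField_sub F F).splits
    exact hsplits.mem_range_of_isRoot
      (FiniteField.X_pow_card_sub_X_ne_zero F Fintype.one_lt_card) (by simp [hx])

theorem mem_lifts_iff_map_frobeniusAlgHom_eq [CommRing K] [IsDomain K] [Algebra F K] {p : K[X]} :
    p ∈ lifts (algebraMap F K) ↔
      p.map (FiniteField.frobeniusAlgHom F K : K →+* K) = p := by
  simp [lifts_iff_coeff_lifts, mem_range_algebraMap_iff_pow_card_eq, Polynomial.ext_iff,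
    -Set.mem_range]

variable [Field K] [Algebra F K]

theorem X_pow_sub_C_mul_X_pow_sub_C_inv_mem_lifts {β : K} (hβ : β ^ (Fintype.card F + 1) = 1)
    (m : ℕ) : (X ^ m - C β) * (X ^ m - C β⁻¹) ∈ lifts (algebraMap F K) := by
  have hinv : β ^ Fintype.card F = β⁻¹ := eq_inv_of_mul_eq_one_left (by rw [← pow_succ, hβ])
  rw [mem_lifts_iff_map_frobeniusAlgHom_eq]
  simp [hinv, mul_comm]

theorem generator_coeffs_in_base_field_general {α γ : K} (hα : α ^ (Fintype.card F + 1) = 1)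
    (hγ : γ ^ (Fintype.card F + 1) = 1) (ρ i : ℕ) :
    ((X - 1) * (X ^ ρ - C α) * (X ^ ρ - C α⁻¹)
      * (X - C (γ ^ 2)) * (X - C (γ ^ (-2 : ℤ)))).coeff i
      ∈ Set.range (algebraMap F K) := by
  have hγ_sq : (γ ^ 2) ^ (Fintype.card F + 1) = 1 := by rw [pow_right_comm, hγ, one_pow]
  have hγ_inv : γ ^ (-2 : ℤ) = (γ ^ 2)⁻¹ := by rw [zpow_neg, zpow_ofNat]
  have hlin : (X - 1 : K[X]) ∈ lifts (algebraMap F K) := (mem_lifts _).mpr ⟨X - 1, by simp⟩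
  have hα_pair := X_pow_sub_C_mul_X_pow_sub_C_inv_mem_lifts hα ρ
  have hγ_pair := X_pow_sub_C_mul_X_pow_sub_C_inv_mem_lifts hγ_sq 1
  have hg := mul_mem (mul_mem hlin hα_pair) hγ_pair
  rw [pow_one, ← mul_assoc, ← mul_assoc, ← hγ_inv] at hg
  exact (lifts_iff_coeff_lifts _).mp hg i

end Frobenius

/-- In the setting of Theorem 4: `n` odd, `gcd(n,q) = 1`, `r ≥ 4`, `(r+2) ∣ gcd(n, q+1)`,
`gcd(n/(r+2), r+2) = 1`, `ρ = n/(r+2)`, `ξ` a primitive `n`-th root of unity in the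
splitting field of `X^n - 1` over `F_q`, `α = ξ^ρ`, `aρ + b(r+2) = 1`, `γ = α^a`, the
polynomial `g(x) = (x-1)(x^ρ - α)(x^ρ - α⁻¹)(x - γ²)(x - γ⁻²)` has all its coefficients
in `F_q` (i.e. in the image of `F_q` in the splitting field). -/
theorem generator_coeffs_in_base_field (F K : Type*) [Field F] [Fintype F]
    [Field K] [Algebra F K]
    (q n r : ℕ) (hq : Fintype.card F = q) (hn : 0 < n) (hodd : Odd n)
    (hcop : Nat.Coprime n q)
    (hr : 4 ≤ r) (hdvd : (r + 2) ∣ Nat.gcd n (q + 1))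
    (ρ : ℕ) (hρ : ρ = n / (r + 2))
    (hgcd : Nat.gcd ρ (r + 2) = 1)
    (ξ : K) (hξ : IsPrimitiveRoot ξ n) (α : K) (hα : α = ξ ^ ρ)
    (a b : ℤ) (hab : a * (ρ : ℤ) + b * ((r : ℤ) + 2) = 1)
    (γ : K) (hγ : γ = α ^ a) :
    ∀ i : ℕ,
      ((X - 1) * (X ^ ρ - C α) * (X ^ ρ - C α⁻¹)
        * (X - C (γ ^ 2)) * (X - C (γ ^ (-2 : ℤ)))).coeff i
        ∈ Set.range (algebraMap F K) := by
  subst hq hρ hα hγ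
  have hα : (ξ ^ (n / (r + 2))) ^ (Fintype.card F + 1) = 1 :=
    pow_div_pow_eq_one hξ.pow_eq_one (hdvd.trans (Nat.gcd_dvd_left ..))
      (hdvd.trans (Nat.gcd_dvd_right ..))
  exact generator_coeffs_in_base_field_general hα (zpow_pow_eq_one hα a) _
end

section
/- Let q be a prime power and n an odd positive integer with gcd(n,q)=1. Let r ≥ 4 with (r+2) dividing gcd(n, q+1) and gcd(n/(r+2), r+2) = 1; set ρ = n/(r+2). Let ξ be a primitive n-th root of unity in the splitting field of x^n - 1 over F_q, let α = ξ^ρ (a primitive (r+2)-th root of unity satisfying α^{q+1} = 1), let a, b be integers with aρ + b(r+2) = 1, and let γ = α^a. Then no nonzero polynomial c(x) ∈ F_q[x] of degree less than n having at most 5 nonzero coefficients is divisible by g(x) = (x-1)(x^ρ - α)(x^ρ - α^{-1})(x - γ^2)(x - γ^{-2}); equivalently, the q-ary cyclic code with generator polynomial g(x) has minimum distance at least 6. -/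
open Polynomial

/-! Split a multiple `p` of `(X - 1)(X ^ ρ - α)(X ^ ρ - α⁻¹)(X - γ²)(X - γ⁻²)` according to the
residues of its exponents modulo `ρ`. Multiplication by `X ^ ρ - c` respects this splitting, and
`γ ^ ρ = α`, so every part vanishes at `γ⁻¹` and at `γ = γ⁻¹ * γ²`. Within one part the powers of
`γ²` indexed by the exponents are distinct, by the Chinese remainder theorem, so the BCH bound gives
each nonzero part at least three terms. Hence `p` has at least six terms unless it is a single part;
in that case the powers of `γ` indexed by its exponents are distinct, and the BCH bound for the five
consecutive roots `γ⁻², γ⁻¹, 1, γ, γ²` gives at least six terms again. -/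

section Powers

theorem zpow_pow_eq_self_of_bezout {G₀ : Type*} [GroupWithZero G₀] {x : G₀} (hx : x ≠ 0)
    {ρ m : ℕ} (hxm : x ^ m = 1) {a b : ℤ} (hab : a * ρ + b * m = 1) : (x ^ a) ^ ρ = x := by
  have hbm : x ^ (b * m) = 1 := by rw [mul_comm, zpow_mul, zpow_natCast, hxm, one_zpow]
  calc (x ^ a) ^ ρ = x ^ (a * ρ) * x ^ (b * m) := by rw [hbm, mul_one, zpow_mul, zpow_natCast]
    _ = x := by rw [← zpow_add₀ hx, hab, zpow_one]

variable {M : Type*} [CommMonoid M] {x : M} {ρ m : ℕ}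

theorem modEq_of_pow_eq_pow_of_isPrimitiveRoot_pow (hm : m ≠ 0) (hx : IsPrimitiveRoot (x ^ ρ) m)
    {i j : ℕ} (hij : x ^ i = x ^ j) : i ≡ j [MOD m] := by
  rw [hx.eq_orderOf, ← (hx.isOfFinOrder hm).pow_eq_pow_iff_modEq, pow_right_comm, hij,
    pow_right_comm]

theorem injOn_pow_of_isPrimitiveRoot_pow (hρm : ρ.Coprime m) (hx : IsPrimitiveRoot (x ^ ρ) m)
    (t : ℕ) : Set.InjOn (x ^ ·) {i | i < ρ * m ∧ i ≡ t [MOD ρ]} := by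
  rintro i ⟨hi, hit⟩ j ⟨hj, hjt⟩ hij
  have hm : m ≠ 0 := by rintro rfl; simp at hi
  have hmod : i ≡ j [MOD ρ * m] := (Nat.modEq_and_modEq_iff_modEq_mul hρm).mp
    ⟨hit.trans hjt.symm, modEq_of_pow_eq_pow_of_isPrimitiveRoot_pow hm hx hij⟩
  exact hmod.eq_of_lt_of_lt hi hj

end Powers

section ResiduePart

/-- The part of `p` supported on the exponents congruent to `t` modulo `m`: the degree-`t` component
of `p` for the grading of `R[X]` by residues modulo `m`. -/
noncomputable def residuePart {R : Type*} [Semiring R] (m t : ℕ) (p : R[X]) : R[X] :=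
  ∑ i ∈ p.support with i ≡ t [MOD m], monomial i (p.coeff i)

theorem coeff_residuePart {R : Type*} [Semiring R] (m t : ℕ) (p : R[X]) (i : ℕ) :
    (residuePart m t p).coeff i = if i ≡ t [MOD m] then p.coeff i else 0 := by
  simp only [residuePart, finsetSum_coeff, coeff_monomial, Finset.sum_ite_eq', Finset.mem_filter,
    mem_support_iff]
  split_ifs <;> simp_all

theorem support_residuePart {R : Type*} [Semiring R] (m t : ℕ) (p : R[X]) :
    (residuePart m t p).support = {i ∈ p.support | i ≡ t [MOD m]} := by
  ext i
  simp [coeff_residuePart, and_comm]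

theorem residuePart_X_pow_sub_C_mul {R : Type*} [Ring R] (m t : ℕ) (c : R) (p : R[X]) :
    residuePart m t ((X ^ m - C c) * p) = (X ^ m - C c) * residuePart m t p := by
  ext i
  have hshift : m ≤ i → (i - m ≡ t [MOD m] ↔ i ≡ t [MOD m]) := fun h => by
    rw [Nat.ModEq.comm, Nat.modEq_sub_modulus_iff h, Nat.ModEq.comm]
  simp only [coeff_residuePart, sub_mul, coeff_sub, coeff_X_pow_mul', coeff_C_mul]
  split_ifs <;> simp_all

theorem X_pow_sub_C_dvd_residuePart {R : Type*} [Ring R] {m : ℕ} {c : R} {p : R[X]}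
    (h : X ^ m - C c ∣ p) (t : ℕ) : X ^ m - C c ∣ residuePart m t p := by
  obtain ⟨s, rfl⟩ := h
  exact ⟨_, residuePart_X_pow_sub_C_mul m t c s⟩

theorem card_support_residuePart_add_le {R : Type*} [Semiring R] {m s t : ℕ}
    (hst : ¬ s ≡ t [MOD m]) (p : R[X]) :
    (residuePart m s p).support.card + (residuePart m t p).support.card ≤ p.support.card := by
  have hdisj : Disjoint (residuePart m s p).support (residuePart m t p).support := by
    simp only [support_residuePart]
    exact Finset.disjoint_filter.mpr fun i _ his hit => hst (his.symm.trans hit)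
  rw [← Finset.card_union_of_disjoint hdisj]
  refine Finset.card_le_card (Finset.union_subset ?_ ?_) <;>
    exact support_residuePart m _ p ▸ Finset.filter_subset _ _

end ResiduePart

section WeightBounds

variable {R : Type*} [CommRing R] [IsDomain R] {p : R[X]}

theorem bch_bound (hp : p ≠ 0) {β δ : R} (hβ : β ≠ 0)
    (hδ : Set.InjOn (δ ^ ·) (p.support : Set ℕ)) {s : ℕ}
    (hroots : ∀ k < s, p.eval (β * δ ^ k) = 0) : s < p.support.card := by
  by_contra! hle
  let e := p.support.equivFin.symm
  have hinj : Function.Injective fun j => δ ^ (e j : ℕ) := fun i j hij =>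
    e.injective (Subtype.ext (hδ (e i).2 (e j).2 hij))
  have hvanish : (fun j => p.coeff (e j) * β ^ (e j : ℕ)) = 0 := by
    refine Matrix.eq_zero_of_forall_pow_sum_mul_pow_eq_zero hinj fun k => ?_
    calc ∑ j, p.coeff (e j) * β ^ (e j : ℕ) * (δ ^ (e j : ℕ)) ^ (k : ℕ)
        = ∑ j, p.coeff (e j) * (β * δ ^ (k : ℕ)) ^ (e j : ℕ) :=
          Finset.sum_congr rfl fun j _ => by rw [mul_pow, pow_right_comm, mul_assoc]
      _ = ∑ i : p.support, p.coeff i * (β * δ ^ (k : ℕ)) ^ (i : ℕ) :=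
          e.sum_comp fun i : p.support => p.coeff i * (β * δ ^ (k : ℕ)) ^ (i : ℕ)
      _ = p.eval (β * δ ^ (k : ℕ)) := by
          rw [eval_eq_sum, sum_def, Finset.sum_coe_sort p.support
            fun i => p.coeff i * (β * δ ^ (k : ℕ)) ^ i]
      _ = 0 := hroots k (k.isLt.trans_le hle)
  obtain ⟨i, hi⟩ := support_nonempty.mpr hp
  have hcoeff : p.coeff i * β ^ i = 0 := by
    simpa [e] using congrFun hvanish (p.support.equivFin ⟨i, hi⟩)
  exact mul_ne_zero (mem_support_iff.mp hi) (pow_ne_zero i hβ) hcoeff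

variable {ρ m : ℕ}

theorem lt_card_support_residuePart (hρm : ρ.Coprime m) (hdeg : p.natDegree < ρ * m)
    {β δ : R} (hβ : β ≠ 0) (hδ : IsPrimitiveRoot (δ ^ ρ) m) {s : ℕ}
    (hdvd : ∀ k < s, X ^ ρ - C ((β * δ ^ k) ^ ρ) ∣ p) {t : ℕ} (ht : residuePart ρ t p ≠ 0) :
    s < (residuePart ρ t p).support.card := by
  refine bch_bound ht hβ
    ((injOn_pow_of_isPrimitiveRoot_pow hρm hδ t).mono fun i hi => ?_) fun k hk => ?_
  · rw [support_residuePart, Finset.mem_coe, Finset.mem_filter] at hi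
    exact ⟨(le_natDegree_of_mem_supp i hi.1).trans_lt hdeg, hi.2⟩
  · exact eval_eq_zero_of_dvd_of_eval_eq_zero (X_pow_sub_C_dvd_residuePart (hdvd k hk) t) (by simp)

theorem min_two_mul_succ_succ_le_card_support (hρm : ρ.Coprime m) (hp : p ≠ 0)
    (hdeg : p.natDegree < ρ * m) {β δ : R} (hβ : β ≠ 0) (hδ : IsPrimitiveRoot (δ ^ ρ) m) {s : ℕ}
    (hdvd : ∀ k < s, X ^ ρ - C ((β * δ ^ k) ^ ρ) ∣ p)
    {β' δ' : R} (hβ' : β' ≠ 0) (hδ' : IsPrimitiveRoot (δ' ^ ρ) m) {s' : ℕ}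
    (hroots : ∀ k < s', p.eval (β' * δ' ^ k) = 0) :
    min (2 * (s + 1)) (s' + 1) ≤ p.support.card := by
  have hpart : ∀ j ∈ p.support, s < (residuePart ρ j p).support.card := fun j hj =>
    lt_card_support_residuePart hρm hdeg hβ hδ hdvd <|
      support_nonempty.mp ⟨j, by simpa [support_residuePart, Nat.ModEq.refl] using hj⟩
  obtain ⟨i, hi⟩ := support_nonempty.mpr hp
  by_cases hsingle : ∀ j ∈ p.support, j ≡ i [MOD ρ]
  · have hinj : Set.InjOn (δ' ^ ·) (p.support : Set ℕ) :=
      (injOn_pow_of_isPrimitiveRoot_pow hρm hδ' i).mono fun j hj =>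
        And.intro ((le_natDegree_of_mem_supp j hj).trans_lt hdeg) (hsingle j hj)
    exact min_le_of_right_le (bch_bound hp hβ' hinj hroots)
  · push Not at hsingle
    obtain ⟨j, hj, hji⟩ := hsingle
    have hadd := card_support_residuePart_add_le hji p
    have hi' := hpart i hi
    have hj' := hpart j hj
    exact min_le_of_left_le (by lia)

end WeightBounds

theorem min_dist_ge_six_general {F K : Type*} [Field F] [Field K] [Algebra F K] {ρ m : ℕ}
    (hρm : ρ.Coprime m) (hm : Odd m) {α γ : K} (hα : IsPrimitiveRoot α m) (hγ : γ ^ ρ = α)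
    {c : F[X]} (hc : c ≠ 0) (hdeg : c.natDegree < ρ * m)
    (hdvd : (X - 1) * (X ^ ρ - C α) * (X ^ ρ - C α⁻¹)
      * (X - C (γ ^ 2)) * (X - C (γ ^ (-2 : ℤ))) ∣ c.map (algebraMap F K)) :
    6 ≤ c.support.card := by
  subst hγ
  have hρ : ρ ≠ 0 := by rintro rfl; simp at hdeg
  have hγ0 : γ ≠ 0 := ne_zero_pow hρ (hα.ne_zero hm.pos.ne')
  have hγ2 : IsPrimitiveRoot ((γ ^ 2) ^ ρ) m := by
    rw [pow_right_comm]
    exact hα.pow_of_coprime 2 (Nat.coprime_two_left.mpr hm)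
  have hdvd_pow : ∀ k < 2, X ^ ρ - C ((γ⁻¹ * (γ ^ 2) ^ k) ^ ρ) ∣ c.map (algebraMap F K) := by
    have hdvd' := dvd_of_mul_right_dvd (dvd_of_mul_right_dvd hdvd)
    intro k hk
    interval_cases k
    · rw [pow_zero, mul_one, inv_pow]
      exact dvd_of_mul_left_dvd hdvd'
    · rw [pow_one, sq, inv_mul_cancel_left₀ hγ0]
      exact dvd_of_mul_left_dvd (dvd_of_mul_right_dvd hdvd')
  have hroots : ∀ k < 5, (c.map (algebraMap F K)).eval (γ ^ (-2 : ℤ) * γ ^ k) = 0 := by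
    intro k hk
    refine eval_eq_zero_of_dvd_of_eval_eq_zero hdvd ?_
    rw [← zpow_natCast, ← zpow_add₀ hγ0]
    interval_cases k <;> simp [zpow_ofNat]
  have hmin := min_two_mul_succ_succ_le_card_support hρm (map_ne_zero hc) (by rwa [natDegree_map])
    (inv_ne_zero hγ0) hγ2 hdvd_pow (zpow_ne_zero _ hγ0) hα hroots
  rwa [support_map_of_injective c (algebraMap F K).injective] at hmin

/-- The Claim of Theorem 4: with `n` odd, `gcd(n,q) = 1`, `r ≥ 4`, `(r+2) ∣ gcd(n, q+1)`,
`gcd(n/(r+2), r+2) = 1`, `ρ = n/(r+2)`, `ξ` a primitive `n`-th root of unity, `α = ξ^ρ`,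
`aρ + b(r+2) = 1` and `γ = α^a`, no nonzero polynomial `c(x) ∈ F_q[x]` of degree `< n`
with at most `5` nonzero coefficients is divisible by
`g(x) = (x-1)(x^ρ - α)(x^ρ - α⁻¹)(x - γ²)(x - γ⁻²)`; equivalently, the `q`-ary cyclic
code with generator polynomial `g` has minimum distance at least `6`. -/
theorem min_dist_ge_six (F K : Type*) [Field F] [Fintype F] [Field K] [Algebra F K]
    (q n r : ℕ) (hq : Fintype.card F = q) (hn : 0 < n) (hodd : Odd n)
    (hcop : Nat.Coprime n q)
    (hr : 4 ≤ r) (hdvd : (r + 2) ∣ Nat.gcd n (q + 1))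
    (ρ : ℕ) (hρ : ρ = n / (r + 2))
    (hgcd : Nat.gcd ρ (r + 2) = 1)
    (ξ : K) (hξ : IsPrimitiveRoot ξ n) (α : K) (hα : α = ξ ^ ρ)
    (a b : ℤ) (hab : a * (ρ : ℤ) + b * ((r : ℤ) + 2) = 1)
    (γ : K) (hγ : γ = α ^ a) :
    ∀ c : F[X], c ≠ 0 → c.natDegree < n → c.support.card ≤ 5 →
      ¬ ((X - 1) * (X ^ ρ - C α) * (X ^ ρ - C α⁻¹)
          * (X - C (γ ^ 2)) * (X - C (γ ^ (-2 : ℤ)))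
          ∣ c.map (algebraMap F K)) := by
  intro c hc hdeg hcard hg
  have hmn : r + 2 ∣ n := hdvd.trans (Nat.gcd_dvd_left n (q + 1))
  have hnρ : n = ρ * (r + 2) := by rw [hρ, Nat.div_mul_cancel hmn]
  have hα' : IsPrimitiveRoot α (r + 2) := hα ▸ hξ.pow hn hnρ
  have hγρ : γ ^ ρ = α := hγ ▸ zpow_pow_eq_self_of_bezout (hα'.ne_zero (by lia))
    hα'.pow_eq_one (mod_cast hab)
  exact hcard.not_gt
    (min_dist_ge_six_general hgcd (hodd.of_dvd_nat hmn) hα' hγρ hc (hnρ ▸ hdeg) hg)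
end

section
/- Let q be a prime power and n an odd positive integer with gcd(n,q)=1, let r ≥ 4 with (r+2) | n, and set ρ = n/(r+2). Let ξ be a primitive n-th root of unity in the splitting field of x^n - 1 over F_q. Suppose c(x) = Σ_{j=0}^{4} c_j x^{k_j} with c_j ∈ F_q, 0 = k_0 < k_1 < k_2 < k_3 < k_4 < n, and suppose that c(ξ^{1 + i(r+2)}) = 0 for all i = 0, 1, ..., ρ-1. If none of k_1, k_2, k_3, k_4 is divisible by ρ, then c_0 = 0. -/
open Polynomial

/-!
Let `η` be a primitive `ρ`-th root of unity. Summing `c(x)` over the coset `x · ⟨η⟩` annihilates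
every monomial whose exponent is not divisible by `ρ` and multiplies the others by `ρ`, which is
nonzero in any domain containing `η`. With `x = ξ` and `η = ξ ^ (r + 2)`, only `ρ * c 0` survives.
-/

theorem geom_sum_pow_of_isPrimitiveRoot {R : Type*} [CommRing R] [IsDomain R] {η : R}
    {ρ : ℕ} (hη : IsPrimitiveRoot η ρ) (k : ℕ) :
    ∑ i ∈ Finset.range ρ, (η ^ k) ^ i = if ρ ∣ k then (ρ : R) else 0 := by
  split_ifs with hk
  · simp [(hη.pow_eq_one_iff_dvd k).mpr hk]
  · have hne : η ^ k - 1 ≠ 0 := sub_ne_zero.mpr (mt (hη.pow_eq_one_iff_dvd k).mp hk)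
    apply eq_zero_of_ne_zero_of_mul_right_eq_zero hne
    rw [geom_sum_mul, pow_right_comm, hη.pow_eq_one, one_pow, sub_self]

theorem sum_range_sum_mul_pow_of_isPrimitiveRoot {R ι : Type*} [CommRing R] [IsDomain R] {η : R}
    {ρ : ℕ} (hη : IsPrimitiveRoot η ρ) (x : R) (s : Finset ι) (a : ι → R) (k : ι → ℕ) :
    ∑ i ∈ Finset.range ρ, ∑ j ∈ s, a j * (x * η ^ i) ^ k j =
      ρ * ∑ j ∈ s with ρ ∣ k j, a j * x ^ k j := by
  calc ∑ i ∈ Finset.range ρ, ∑ j ∈ s, a j * (x * η ^ i) ^ k j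
      = ∑ j ∈ s, a j * x ^ k j * ∑ i ∈ Finset.range ρ, (η ^ k j) ^ i := by
        simp only [mul_pow, pow_right_comm η, Finset.mul_sum, mul_assoc]
        exact Finset.sum_comm
    _ = ∑ j ∈ s, if ρ ∣ k j then ρ * (a j * x ^ k j) else 0 := by
        simp only [geom_sum_pow_of_isPrimitiveRoot hη, mul_ite, mul_zero, mul_comm _ (ρ : R)]
    _ = ρ * ∑ j ∈ s with ρ ∣ k j, a j * x ^ k j := by
        rw [← Finset.sum_filter, Finset.mul_sum]

theorem coeff_zero_of_no_index_div_general {A R ι : Type*} [CommSemiring A] [CommRing R]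
    [IsDomain R] [Algebra A R] [FaithfulSMul A R] [Fintype ι] {ρ : ℕ} [NeZero ρ] {x η : R}
    (hx : x ≠ 0) (hη : IsPrimitiveRoot η ρ) (c : ι → A) (k : ι → ℕ) (j₀ : ι)
    (hroot : ∀ i < ρ, ∑ j, algebraMap A R (c j) * (x * η ^ i) ^ k j = 0)
    (hdvd : ∀ j, ρ ∣ k j ↔ j = j₀) :
    c j₀ = 0 := by
  have hsupport : ({j | ρ ∣ k j} : Finset ι) = {j₀} := by ext j; simp [hdvd]
  have hρ : (ρ : R) ≠ 0 := (hη.neZero' (n := ρ)).out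
  have hterm : ρ * (algebraMap A R (c j₀) * x ^ k j₀) = 0 := calc
    ρ * (algebraMap A R (c j₀) * x ^ k j₀)
        = ∑ i ∈ Finset.range ρ, ∑ j, algebraMap A R (c j) * (x * η ^ i) ^ k j := by
          rw [sum_range_sum_mul_pow_of_isPrimitiveRoot hη, hsupport, Finset.sum_singleton]
    _ = 0 := Finset.sum_eq_zero fun i hi => hroot i (Finset.mem_range.mp hi)
  have hcoeff : algebraMap A R (c j₀) = 0 := by simpa [hρ, hx] using hterm
  exact (FaithfulSMul.algebraMap_eq_zero_iff A R).mp hcoeff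

/-- Case (i) in the proof of the Claim of Theorem 4: with `ρ = n/(r+2)` and `ξ` a
primitive `n`-th root of unity, if `c(x) = ∑_{j=0}^{4} c_j x^{k_j}` with `c_j ∈ F_q`,
`0 = k_0 < k_1 < k_2 < k_3 < k_4 < n`, vanishes at `ξ^{1 + i(r+2)}` for all
`i = 0, 1, ..., ρ-1`, and none of `k_1, k_2, k_3, k_4` is divisible by `ρ`, then
`c_0 = 0`. -/
theorem coeff_zero_of_no_index_div (F K : Type*) [Field F] [Fintype F] [Field K] [Algebra F K]
    (q n r : ℕ) (hq : Fintype.card F = q) (hn : 0 < n) (hodd : Odd n)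
    (hcop : Nat.Coprime n q)
    (hr : 4 ≤ r) (hdvd : (r + 2) ∣ n)
    (ρ : ℕ) (hρ : ρ = n / (r + 2))
    (ξ : K) (hξ : IsPrimitiveRoot ξ n)
    (c : Fin 5 → F) (k : Fin 5 → ℕ)
    (hk0 : k 0 = 0) (hkmono : StrictMono k) (hkn : k 4 < n)
    (hroot : ∀ i : ℕ, i < ρ →
      ∑ j : Fin 5, algebraMap F K (c j) * ξ ^ ((1 + i * (r + 2)) * k j) = 0)
    (hndvd : ∀ j : Fin 5, j ≠ 0 → ¬ ρ ∣ k j) :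
    c 0 = 0 := by
  have hnρ : n = (r + 2) * ρ := by rw [hρ, Nat.mul_div_cancel' hdvd]
  have : NeZero ρ := ⟨by rintro rfl; exact hn.ne' hnρ⟩
  refine coeff_zero_of_no_index_div_general (hξ.ne_zero hn.ne') (hξ.pow hn hnρ) c k 0
    (fun i hi => ?_) (fun j => ⟨not_imp_not.mp (hndvd j), by rintro rfl; simp [hk0]⟩)
  simpa only [pow_mul, pow_add, pow_one, pow_right_comm ξ i] using hroot i hi
end
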